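/- Let G = (V,E) be a finite simple graph with n vertices. If G has a vertex x with d(x) = Δ(G) ≥ 2n/3, and x has a neighbor y such that {x,y} is a dominating clique in G (i.e., x and y are adjacent and every other vertex is adjacent to x or to y), then G is antimagic. -/

import Mathlib

open Finset

/-- A finite simple graph is *antimagic* if there is a bijective labelling of its edges
by `{1, 2, …, m}` (where `m` is the number of edges) such that the vertex sums
`σ(u) = ∑_{v : uv ∈ E} f(uv)` are pairwise distinct. -/
def IsAntimagic {V : Type*} [Fintype V] [DecidableEq V] (G : SimpleGraph V)
    [DecidableRel G.Adj] : Prop :=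
  ∃ f : Sym2 V → ℕ,
    Set.BijOn f ↑G.edgeFinset ↑(Finset.Icc 1 G.edgeFinset.card) ∧
    Function.Injective fun u : V => ∑ v ∈ G.neighborFinset u, f s(u, v)

/-!
Every vertex other than `y` owns one edge of a spanning double star with centres `x` and `y`; the
vertex `x` owns the central edge. The `L` edges outside the star receive the labels `1, …, L`,
those at `y` first. The leaves are then ranked by their partial sums, leaves at `y` first among
ties, and receive the star labels `L + 1, …` in that order with one label `j` left out for the edge
`xy`. Leaf sums are therefore strictly increasing along the ranking, for every `j`. The sum at `y`
is monotone in `j`, so that a suitable `j` makes it exceed the leaf sums ranked before the gap and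
stay below those ranked after it. Finally, `3 d(x) ≥ 2 n` means that `x` has more than twice as many
leaves as `y`, which makes the sum at `x` the largest one.
-/

section DistinctNaturals

lemma two_mul_sum_range_cast_add (n : ℕ) : 2 * ∑ i ∈ range n, (i : ℤ) + n = n * n := by
  induction n with
  | zero => simp
  | succ n ih =>
    rw [sum_range_succ]
    push_cast
    linarith

variable {α : Type*} {s : Finset α} {r : α → ℕ}

lemma two_mul_sum_add_sq_card_le {K : ℕ} (hinj : Set.InjOn r s) (hle : ∀ a ∈ s, r a ≤ K) :
    2 * ∑ a ∈ s, r a + #s * #s ≤ #s * (2 * K + 1) := by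
  classical
  have hinj' : Set.InjOn (fun a ↦ (r a : ℤ)) s := Nat.cast_injective.comp_injOn hinj
  have hbound := sum_le_sum_range (s := s.image fun a ↦ (r a : ℤ)) (c := K)
    (by simpa using hle)
  have hgauss := two_mul_sum_range_cast_add #s
  rw [sum_image hinj', card_image_of_injOn hinj', sum_sub_distrib, sum_const, card_range,
    nsmul_eq_mul] at hbound
  zify
  linarith

lemma card_mul_le_two_mul_sum {L : ℕ} (hinj : Set.InjOn r s) (hlt : ∀ a ∈ s, L < r a) :
    #s * (2 * L + #s + 1) ≤ 2 * ∑ a ∈ s, r a := by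
  classical
  have hinj' : Set.InjOn (fun a ↦ (r a : ℤ)) s := Nat.cast_injective.comp_injOn hinj
  have hbound := sum_range_le_sum (s := s.image fun a ↦ (r a : ℤ)) (c := L + 1)
    (by simpa [Int.add_one_le_iff] using hlt)
  have hgauss := two_mul_sum_range_cast_add #s
  rw [sum_image hinj', card_image_of_injOn hinj', sum_add_distrib, sum_const, card_range,
    nsmul_eq_mul] at hbound
  zify
  linarith

end DistinctNaturals

section Ranking

variable {α β : Type*} [LinearOrder β]

/-- `r` numbers the elements of `s` by `L + 1, …, L + #s` in an order of weakly increasing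
`key`; the order of elements with equal keys is left open. -/
structure IsRanking (key : α → β) (L : ℕ) (s : Finset α) (r : α → ℕ) : Prop where
  bijOn : Set.BijOn r s (Ioc L (L + #s))
  key_le : ∀ a ∈ s, ∀ b ∈ s, r a ≤ r b → key a ≤ key b

lemma exists_isRanking (key : α → β) (L : ℕ) (s : Finset α) :
    ∃ r, IsRanking key L s r := by
  classical
  induction s using induction_on_max_value key with
  | empty => exact ⟨fun _ ↦ 0, by simp, by simp⟩
  | insert a s ha hmax ih =>
    obtain ⟨r, hbij, hkey⟩ := ih
    set r' := Function.update r a (L + #s + 1)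
    have hr'a : r' a = L + #s + 1 := Function.update_self ..
    have hr' : Set.EqOn r r' s := fun b hb ↦
      (Function.update_of_ne (ne_of_mem_of_not_mem hb ha) _ _).symm
    refine ⟨r', ?_, fun b hb c hc hbc ↦ ?_⟩
    · rw [card_insert_of_notMem ha, ← add_assoc, ← insert_Ioc_right_eq_Ioc_add_one (by omega),
        coe_insert, coe_insert, ← hr'a]
      exact (hbij.congr hr').insert (by simp [hr'a])
    · have hlt : ∀ d ∈ s, r' d < r' a := fun d hd ↦ by
        have := (mem_Ioc.1 (hbij.mapsTo hd)).2
        rw [← hr' hd, hr'a]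
        omega
      obtain rfl | hbs := mem_insert.1 hb <;> obtain rfl | hcs := mem_insert.1 hc
      · rfl
      · exact absurd hbc (hlt c hcs).not_ge
      · exact hmax b hbs
      · exact hkey b hbs c hcs (by rwa [hr' hbs, hr' hcs])

namespace IsRanking

variable {key : α → β} {L : ℕ} {s : Finset α} {r : α → ℕ}

lemma mem_Ioc (hr : IsRanking key L s r) {a : α} (ha : a ∈ s) : r a ∈ Ioc L (L + #s) :=
  hr.bijOn.mapsTo ha

lemma le_add_card_filter_key_le (hr : IsRanking key L s r) {a : α} (ha : a ∈ s) :
    r a ≤ L + #{b ∈ s | key b ≤ key a} := by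
  have hsub : Ioc L (r a) ⊆ image r {b ∈ s | key b ≤ key a} := fun i hi ↦ by
    have hra := Finset.mem_Ioc.1 (hr.mem_Ioc ha)
    rw [Finset.mem_Ioc] at hi
    obtain ⟨b, hb, rfl⟩ := hr.bijOn.surjOn (Finset.mem_Ioc.2 ⟨hi.1, hi.2.trans hra.2⟩)
    exact mem_image_of_mem r (mem_filter.2 ⟨hb, hr.key_le b hb a ha hi.2⟩)
  have hcard := (card_le_card hsub).trans card_image_le
  rw [Nat.card_Ioc] at hcard
  omega

end IsRanking

end Ranking

section Skip

/-- The increasing enumeration of `ℕ \ {j}` that is the identity below `j`. -/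
def skip (j i : ℕ) : ℕ := if i < j then i else i + 1

lemma skip_strictMono (j : ℕ) : StrictMono (skip j) := by
  intro a b hab
  unfold skip
  split_ifs <;> omega

lemma le_skip (j i : ℕ) : i ≤ skip j i := by
  unfold skip
  split_ifs <;> omega

lemma skip_le_add_one (j i : ℕ) : skip j i ≤ i + 1 := by
  unfold skip
  split_ifs <;> omega

lemma bijOn_skip_Ioc {L K j : ℕ} (hj : j ∈ Ioc L (K + 1)) :
    Set.BijOn (skip j) (Ioc L K) ((Ioc L (K + 1)).erase j) := by
  rw [mem_Ioc] at hj
  refine ⟨fun i hi ↦ ?_, (skip_strictMono j).injective.injOn, fun i hi ↦ ?_⟩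
  · simp only [coe_Ioc, Set.mem_Ioc, coe_erase, Set.mem_sdiff, Set.mem_singleton_iff] at hi ⊢
    unfold skip
    split_ifs <;> omega
  · simp only [coe_Ioc, Set.mem_Ioc, coe_erase, Set.mem_sdiff, Set.mem_singleton_iff] at hi
    refine ⟨if i < j then i else i - 1, ?_, ?_⟩
    · simp only [coe_Ioc, Set.mem_Ioc]
      split_ifs <;> omega
    · unfold skip
      split_ifs <;> omega

lemma monotone_add_sum_skip {α : Type*} {s : Finset α} {r : α → ℕ} (hinj : Set.InjOn r s) :
    Monotone fun j ↦ j + ∑ a ∈ s, skip j (r a) := by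
  refine monotone_nat_of_le_succ fun j ↦ ?_
  have hstep : ∑ a ∈ s, skip j (r a) ≤
      ∑ a ∈ s, (skip (j + 1) (r a) + if r a = j then 1 else 0) := by
    refine sum_le_sum fun a _ ↦ ?_
    unfold skip
    split_ifs <;> omega
  have hone : ∑ a ∈ s, (if r a = j then 1 else 0) ≤ 1 := by
    rw [← card_filter, card_le_one]
    intro a ha b hb
    rw [mem_filter] at ha hb
    exact hinj ha.1 hb.1 (ha.2.trans hb.2.symm)
  rw [sum_add_distrib] at hstep
  omega

end Skip

-- The smallest `j` at which `A j` does not exceed the values ranked `j` or more will do.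
lemma exists_threshold {α : Type*} {s : Finset α} {r a : α → ℕ} {A : ℕ → ℕ} {L K : ℕ}
    (hLK : L ≤ K) (hr : ∀ v ∈ s, r v ∈ Ioc L K) (hA : Monotone A)
    (ha : ∀ u ∈ s, ∀ v ∈ s, r u ≤ r v → a u ≤ a v) :
    ∃ j ∈ Ioc L (K + 1), ∀ v ∈ s, (r v < j → a v < A j) ∧ (j ≤ r v → A j ≤ a v) := by
  classical
  have htop : L < K + 1 ∧ ∀ v ∈ s, K + 1 ≤ r v → A (K + 1) ≤ a v :=
    ⟨by omega, fun v hv hle ↦ by have := mem_Ioc.1 (hr v hv); omega⟩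
  have hex : ∃ j, L < j ∧ ∀ v ∈ s, j ≤ r v → A j ≤ a v := ⟨K + 1, htop⟩
  obtain ⟨hLj, habove⟩ := Nat.find_spec hex
  refine ⟨Nat.find hex, mem_Ioc.2 ⟨hLj, Nat.find_min' hex htop⟩,
    fun v hv ↦ ⟨fun hlt ↦ ?_, habove v hv⟩⟩
  have hpred := Nat.find_min hex (Nat.sub_one_lt_of_lt hLj)
  have hLv := (mem_Ioc.1 (hr v hv)).1
  push Not at hpred
  obtain ⟨u, hu, hju, hau⟩ := hpred (by omega)
  calc a v ≤ a u := ha v hv u hu (by omega)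
    _ < A (Nat.find hex - 1) := hau
    _ ≤ A (Nat.find hex) := hA (Nat.sub_le _ _)

section Separation

variable {α : Type*}

/-- Leaves are ordered by their weight, and leaves in `B` come first among those of equal
weight. -/
abbrev leafKey (B : Finset α) (w : α → ℕ) (v : α) : ℕ ×ₗ Prop := toLex (w v, v ∉ B)

variable {B : Finset α} {w : α → ℕ} {L : ℕ} {r : α → ℕ}

lemma weight_le_of_rank_le {s : Finset α} (hr : IsRanking (leafKey B w) L s r) {u v : α}
    (hu : u ∈ s) (hv : v ∈ s) (huv : r u ≤ r v) : w u ≤ w v :=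
  (Prod.Lex.toLex_le_toLex'.1 (hr.key_le u hu v hv huv)).1

lemma injOn_weight_add_skip {s : Finset α} (hr : IsRanking (leafKey B w) L s r) (j : ℕ) :
    Set.InjOn (fun v ↦ w v + skip j (r v)) s := by
  have hlt : ∀ u ∈ s, ∀ v ∈ s, r u < r v → w u + skip j (r u) < w v + skip j (r v) :=
    fun u hu v hv huv ↦
      add_lt_add_of_le_of_lt (weight_le_of_rank_le hr hu hv huv.le) (skip_strictMono j huv)
  intro u hu v hv huv
  obtain huv' | huv' | huv' := lt_trichotomy (r u) (r v)
  · exact absurd huv (hlt u hu v hv huv').ne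
  · exact hr.bijOn.injOn hu hv huv'
  · exact absurd huv (hlt v hv u hu huv').ne'

lemma exists_skip_leaf_ne {t : Finset α} (hr : IsRanking (leafKey B w) L t r) (hB : B ⊆ t)
    (s : ℕ) : ∃ j ∈ Ioc L (L + #t + 1),
      ∀ v ∈ t, w v + skip j (r v) ≠ s + (j + ∑ u ∈ B, skip j (r u)) := by
  obtain ⟨j, hj, hcross⟩ := exists_threshold (a := fun v ↦ w v + r v)
    (Nat.le_add_right L #t) (fun v hv ↦ hr.mem_Ioc hv)
    ((monotone_add_sum_skip (hr.bijOn.injOn.mono hB)).const_add s)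
    (fun u hu v hv huv ↦ add_le_add (weight_le_of_rank_le hr hu hv huv) huv)
  refine ⟨j, hj, fun v hv ↦ ?_⟩
  obtain ⟨hbelow, habove⟩ := hcross v hv
  obtain hlt | hle := lt_or_ge (r v) j
  · rw [skip, if_pos hlt]
    exact (hbelow hlt).ne
  · have := habove hle
    rw [skip, if_neg hle.not_gt]
    omega

variable [DecidableEq α] {N : Finset α}

lemma sum_rank_weight_zero_le (hr : IsRanking (leafKey B w) L (N ∪ B) r) :
    ∑ v ∈ B with w v = 0, r v ≤ #{v ∈ B | w v = 0} * (L + #{v ∈ B | w v = 0}) := by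
  refine sum_le_card_nsmul _ _ _ fun v hv ↦ ?_
  rw [mem_filter] at hv
  refine (hr.le_add_card_filter_key_le (mem_union_right N hv.1)).trans
    (Nat.add_le_add_left (card_le_card fun u hu ↦ ?_) L)
  obtain ⟨-, hkey⟩ := mem_filter.1 hu
  obtain ⟨hw, htie⟩ := Prod.Lex.toLex_le_toLex'.1 hkey
  have hwu : w u = 0 := Nat.le_zero.1 (hw.trans hv.2.le)
  exact mem_filter.2 ⟨not_not.1 fun huB ↦ htie (hwu.trans hv.2.symm) huB hv.1, hwu⟩

-- `n` counts the leaves in `N`, while `p` and `q` count those in `B` of zero and nonzero weight;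
-- `R`, `R₀` and `R₁` are the corresponding rank sums.
lemma add_lt_of_rank_sum_bounds {p q n k L s R₀ R₁ R : ℕ} (hn : 2 * (p + q) + 1 ≤ n)
    (hk : k + (p + q) ≤ n) (hs : s ≤ k * k) (hL : q + 2 * k ≤ 2 * L) (h₀ : R₀ ≤ p * (L + p))
    (h₁ : 2 * R₁ + q * q ≤ q * (2 * (L + (n + (p + q))) + 1))
    (htotal : (n + (p + q)) * (2 * L + (n + (p + q)) + 1) ≤ 2 * (R + (R₀ + R₁))) :
    s + (R₀ + R₁ + (p + q)) < R := by
  obtain ⟨t, rfl⟩ := Nat.exists_eq_add_of_le hn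
  have hkk : k * k ≤ (p + q + 1 + t) * k := Nat.mul_le_mul_right _ (by omega)
  have hkL : (p + q + 1 + t) * (q + 2 * k) ≤ (p + q + 1 + t) * (2 * L) :=
    Nat.mul_le_mul_left _ hL
  nlinarith [Nat.zero_le (p * t), Nat.zero_le (q * t), Nat.zero_le (p * q), Nat.zero_le (p * p)]

lemma add_sum_far_lt_sum_near {s k : ℕ} (hr : IsRanking (leafKey B w) L (N ∪ B) r)
    (hNB : Disjoint N B) (hcard : 2 * #B + 1 ≤ #N) (hk : k + #B ≤ #N) (hs : s ≤ k * k)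
    (hL : #{v ∈ B | w v ≠ 0} + 2 * k ≤ 2 * L) (j : ℕ) :
    s + ∑ v ∈ B, skip j (r v) < ∑ v ∈ N, skip j (r v) := by
  have hinj := hr.bijOn.injOn
  have hsplit : #{v ∈ B | w v = 0} + #{v ∈ B | w v ≠ 0} = #B :=
    card_filter_add_card_filter_not _
  have hsum : ∑ v ∈ B with w v = 0, r v + ∑ v ∈ B with w v ≠ 0, r v = ∑ v ∈ B, r v :=
    sum_filter_add_sum_filter_not ..
  have hsub : B.filter (w · ≠ 0) ⊆ N ∪ B := (filter_subset _ _).trans subset_union_right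
  have hnonzero := two_mul_sum_add_sq_card_le (hinj.mono hsub)
    fun v hv ↦ (mem_Ioc.1 (hr.mem_Ioc (hsub hv))).2
  have htotal := card_mul_le_two_mul_sum hinj fun v hv ↦ (mem_Ioc.1 (hr.mem_Ioc hv)).1
  rw [card_union_of_disjoint hNB, ← hsplit] at hnonzero htotal
  rw [sum_union hNB, ← hsum] at htotal
  calc s + ∑ v ∈ B, skip j (r v)
      ≤ s + ∑ v ∈ B, (r v + 1) := by gcongr; exact skip_le_add_one j _
    _ < ∑ v ∈ N, r v := by
      rw [sum_add_distrib, ← card_eq_sum_ones, ← hsum, ← hsplit]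
      exact add_lt_of_rank_sum_bounds (by omega) (by omega) hs hL
        (sum_rank_weight_zero_le hr) hnonzero htotal
    _ ≤ ∑ v ∈ N, skip j (r v) := sum_le_sum fun v _ ↦ le_skip j _

lemma leaf_lt_add_sum_near (hr : IsRanking (leafKey B w) L (N ∪ B) r) (hNB : Disjoint N B)
    (hcard : 2 * #B + 1 ≤ #N) (hw : ∀ v ∈ N ∪ B, w v ≤ #N * L) {j : ℕ} (hj : L < j) {v : α}
    (hv : v ∈ N ∪ B) : w v + skip j (r v) < j + ∑ u ∈ N, skip j (r u) := by
  have hwv := hw v hv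
  have hL : ∀ u ∈ N ∪ B, L ≤ skip j (r u) := fun u hu ↦
    (mem_Ioc.1 (hr.mem_Ioc hu)).1.le.trans (le_skip j _)
  obtain hvN | hvB := mem_union.1 hv
  · have herase : #(N.erase v) * L ≤ ∑ u ∈ N.erase v, skip j (r u) :=
      card_nsmul_le_sum _ _ _ fun u hu ↦ hL u (mem_union_left B (mem_of_mem_erase hu))
    rw [← card_erase_add_one hvN, add_one_mul] at hwv
    rw [← add_sum_erase N _ hvN]
    omega
  · have hpos : 0 < #B := card_pos.2 ⟨v, hvB⟩
    have hsum := card_mul_le_two_mul_sum (hr.bijOn.injOn.mono subset_union_left)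
      fun u hu ↦ (mem_Ioc.1 (hr.mem_Ioc (mem_union_left B hu))).1
    have hskip : ∑ u ∈ N, r u ≤ ∑ u ∈ N, skip j (r u) := sum_le_sum fun u _ ↦ le_skip j _
    have hrv := (mem_Ioc.1 (hr.mem_Ioc hv)).2
    have hskipv := skip_le_add_one j (r v)
    rw [card_union_of_disjoint hNB] at hrv
    nlinarith

/-- The sums at the leaves `N ∪ B` and at the two centres of a double star are pairwise distinct,
the largest one being at the centre of `N`. The leaf `v` is joined to its centre by an edge labelled
`g v`, the two centres by an edge labelled `j`; `w v` and `s` are the contributions of all other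
edges at `v` and at the centre of `B`. -/
structure IsSeparating (N B : Finset α) (w : α → ℕ) (s j : ℕ) (g : α → ℕ) : Prop where
  injOn_leaf : Set.InjOn (fun v ↦ w v + g v) (N ∪ B : Finset α)
  leaf_ne : ∀ v ∈ N ∪ B, w v + g v ≠ s + (j + ∑ u ∈ B, g u)
  leaf_lt : ∀ v ∈ N ∪ B, w v + g v < j + ∑ u ∈ N, g u
  centre_lt : s + (j + ∑ u ∈ B, g u) < j + ∑ u ∈ N, g u

lemma IsSeparating.congr {s j : ℕ} {g g' : α → ℕ} (h : IsSeparating N B w s j g)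
    (hg : ∀ v ∈ N ∪ B, g v = g' v) : IsSeparating N B w s j g' := by
  have hN : ∑ u ∈ N, g u = ∑ u ∈ N, g' u := sum_congr rfl fun u hu ↦ hg u (mem_union_left B hu)
  have hB : ∑ u ∈ B, g u = ∑ u ∈ B, g' u := sum_congr rfl fun u hu ↦ hg u (mem_union_right N hu)
  refine ⟨h.injOn_leaf.congr fun v hv ↦ congrArg (w v + ·) (hg v hv), fun v hv ↦ ?_,
    fun v hv ↦ ?_, ?_⟩
  · rw [← hg v hv, ← hB]
    exact h.leaf_ne v hv
  · rw [← hg v hv, ← hN]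
    exact h.leaf_lt v hv
  · rw [← hB, ← hN]
    exact h.centre_lt

lemma exists_isSeparating {s k : ℕ} {x : α} (hx : x ∉ N ∪ B) (hNB : Disjoint N B)
    (hcard : 2 * #B + 1 ≤ #N) (hk : k + #B ≤ #N) (hs : s ≤ k * k)
    (hL : #{v ∈ B | w v ≠ 0} + 2 * k ≤ 2 * L) (hw : ∀ v ∈ N ∪ B, w v ≤ #N * L) :
    ∃ g, IsSeparating N B w s (g x) g ∧
      Set.BijOn g (insert x (N ∪ B) : Finset α) (Ioc L (L + #(N ∪ B) + 1)) := by
  obtain ⟨r, hr⟩ := exists_isRanking (leafKey B w) L (N ∪ B)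
  obtain ⟨j, hj, hne⟩ := exists_skip_leaf_ne hr subset_union_right s
  have hsep : IsSeparating N B w s j fun v ↦ skip j (r v) :=
    ⟨injOn_weight_add_skip hr j, hne,
      fun v hv ↦ leaf_lt_add_sum_near hr hNB hcard hw (mem_Ioc.1 hj).1 hv, by
      have := add_sum_far_lt_sum_near hr hNB hcard hk hs hL j
      omega⟩
  set g := Function.update (fun v ↦ skip j (r v)) x j
  have hgx : g x = j := Function.update_self ..
  have hleaf : ∀ v ∈ N ∪ B, skip j (r v) = g v := fun v hv ↦
    (Function.update_of_ne (ne_of_mem_of_not_mem hv hx) j fun v ↦ skip j (r v)).symm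
  have hbij : Set.BijOn g (N ∪ B : Finset α) ((Ioc L (L + #(N ∪ B) + 1)).erase (g x)) := by
    rw [hgx]
    exact ((bijOn_skip_Ioc hj).comp hr.bijOn).congr hleaf
  refine ⟨g, hgx ▸ hsep.congr hleaf, ?_⟩
  have hgmem : g x ∈ Ioc L (L + #(N ∪ B) + 1) := hgx.symm ▸ hj
  rw [← insert_erase hgmem, coe_insert, coe_insert]
  exact hbij.insert (by simp)

end Separation

section DoubleStar

variable {V : Type*} (G : SimpleGraph V) (x y : V)

/-- `x` and `y` are adjacent and every other vertex is adjacent to one of them, that is,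
`{x, y}` is a dominating clique. -/
structure IsDominatingEdge : Prop where
  adj : G.Adj x y
  adj_or_adj : ∀ v, v ≠ x → v ≠ y → G.Adj v x ∨ G.Adj v y

variable [DecidableRel G.Adj]

/-- The vertex to which `v` is joined in the double star with centres `x` and `y`: the centre `x`
whenever possible. In particular `x` itself is joined to `y`. -/
def hub (v : V) : V := if G.Adj x v then x else y

/-- The edge joining `v` to its hub. For `v = x` this is the central edge `s(x, y)`, so that every
vertex other than `y` owns exactly one edge of the double star. -/
def spoke (v : V) : Sym2 V := s(v, hub G x y v)

variable {G x y}

lemma hub_of_adj {v : V} (h : G.Adj x v) : hub G x y v = x := if_pos h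

lemma hub_of_not_adj {v : V} (h : ¬G.Adj x v) : hub G x y v = y := if_neg h

lemma hub_eq_or_eq (v : V) : hub G x y v = x ∨ hub G x y v = y := ite_eq_or_eq ..

lemma injOn_spoke : Set.InjOn (spoke G x y) {y}ᶜ := by
  intro u hu v hv huv
  obtain ⟨huv, -⟩ | ⟨hu', hv'⟩ := Sym2.eq_iff.1 huv
  · exact huv
  obtain hx | hy := hub_eq_or_eq (G := G) (x := x) (y := y) v
  · rw [hu', hx, hub_of_not_adj G.irrefl] at hv'
    exact absurd hv'.symm hv
  · exact absurd (hu'.trans hy) hu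

lemma IsDominatingEdge.spoke_mem_edgeSet (hdom : IsDominatingEdge G x y) {v : V} (hv : v ≠ y) :
    spoke G x y v ∈ G.edgeSet := by
  rw [spoke, SimpleGraph.mem_edgeSet]
  by_cases hxv : G.Adj x v
  · rw [hub_of_adj hxv]
    exact hxv.symm
  · rw [hub_of_not_adj hxv]
    obtain rfl | hvx := eq_or_ne v x
    · exact hdom.adj
    · exact (hdom.adj_or_adj v hvx hv).resolve_left fun h ↦ hxv h.symm

variable [Fintype V] [DecidableEq V]

variable (G x y) in
/-- The edges outside the double star. -/
def rest : Finset (Sym2 V) := G.edgeFinset \ (univ.erase y).image (spoke G x y)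

variable (G x y) in
/-- The leaves of the double star at `x`. -/
def near : Finset V := (G.neighborFinset x).erase y

variable (G x y) in
/-- The leaves of the double star at `y`. -/
def far : Finset V := {v | v ≠ x ∧ v ≠ y ∧ ¬G.Adj x v}

lemma mem_near {v : V} : v ∈ near G x y ↔ v ≠ y ∧ G.Adj x v := by
  simp [near]

lemma mem_far {v : V} : v ∈ far G x y ↔ v ≠ x ∧ v ≠ y ∧ ¬G.Adj x v := by
  simp [far]

lemma disjoint_near_far : Disjoint (near G x y) (far G x y) :=
  disjoint_left.2 fun _ hnear hfar ↦ (mem_far.1 hfar).2.2 (mem_near.1 hnear).2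

lemma mem_near_union_far {v : V} : v ∈ near G x y ∪ far G x y ↔ v ≠ x ∧ v ≠ y := by
  rw [mem_union, mem_near, mem_far]
  have : G.Adj x v → v ≠ x := fun h ↦ h.ne'
  tauto

lemma left_notMem_near_union_far : x ∉ near G x y ∪ far G x y := fun h ↦
  (mem_near_union_far.1 h).1 rfl

lemma left_notMem_near : x ∉ near G x y := fun h ↦
  left_notMem_near_union_far (mem_union_left _ h)

lemma left_notMem_far : x ∉ far G x y := fun h ↦
  left_notMem_near_union_far (mem_union_right _ h)

lemma insert_near_union_far (hxy : x ≠ y) :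
    insert x (near G x y ∪ far G x y) = univ.erase y := by
  ext v
  rw [mem_insert, mem_near_union_far]
  simp only [mem_erase, mem_univ, and_true]
  have : v = x → v ≠ y := fun h ↦ h ▸ hxy
  tauto

lemma filter_mem_spoke_left (hxy : x ≠ y) :
    {u ∈ univ.erase y | x ∈ spoke G x y u} = insert x (near G x y) := by
  ext u
  simp only [mem_filter, mem_erase, mem_univ, and_true, mem_insert, mem_near, spoke, hub,
    Sym2.mem_iff]
  by_cases hux : u = x <;> split_ifs <;> simp_all [eq_comm]

lemma filter_mem_spoke_right (hxy : x ≠ y) :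
    {u ∈ univ.erase y | y ∈ spoke G x y u} = insert x (far G x y) := by
  ext u
  simp only [mem_filter, mem_erase, mem_univ, and_true, mem_insert, mem_far, spoke, hub,
    Sym2.mem_iff]
  by_cases hux : u = x <;> split_ifs <;> simp_all [eq_comm]

lemma filter_mem_spoke_of_ne {v : V} (hvx : v ≠ x) (hvy : v ≠ y) :
    {u ∈ univ.erase y | v ∈ spoke G x y u} = {v} := by
  ext u
  simp only [mem_filter, mem_erase, mem_univ, and_true, mem_singleton, spoke, hub, Sym2.mem_iff]
  split_ifs <;> grind

lemma spoke_notMem_rest {v : V} (hv : v ≠ y) : spoke G x y v ∉ rest G x y := fun h ↦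
  (mem_sdiff.1 h).2 (mem_image_of_mem _ (mem_erase.2 ⟨hv, mem_univ v⟩))

lemma sum_neighborFinset_eq_sum_incident {M : Type*} [AddCommMonoid M] (f : Sym2 V → M) (v : V) :
    ∑ u ∈ G.neighborFinset v, f s(v, u) = ∑ e ∈ G.edgeFinset with v ∈ e, f e := by
  have himage : {e ∈ G.edgeFinset | v ∈ e} = (G.neighborFinset v).image (s(v, ·)) := by
    ext e
    simp only [mem_filter, SimpleGraph.mem_edgeFinset, mem_image, SimpleGraph.mem_neighborFinset]
    constructor
    · rintro ⟨he, u, rfl⟩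
      exact ⟨u, he, rfl⟩
    · rintro ⟨u, hu, rfl⟩
      exact ⟨hu, Sym2.mem_mk_left v u⟩
  rw [himage, sum_image fun a _ b _ ↦ Sym2.congr_right.1]

lemma IsDominatingEdge.image_spoke_subset (hdom : IsDominatingEdge G x y) :
    (univ.erase y).image (spoke G x y) ⊆ G.edgeFinset :=
  image_subset_iff.2 fun _ hv ↦
    SimpleGraph.mem_edgeFinset.2 (hdom.spoke_mem_edgeSet (ne_of_mem_erase hv))

lemma injOn_spoke_erase : Set.InjOn (spoke G x y) (univ.erase y : Finset V) :=
  injOn_spoke.mono fun _ hv ↦ ne_of_mem_erase hv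

lemma IsDominatingEdge.sum_incident_eq {M : Type*} [AddCommMonoid M]
    (hdom : IsDominatingEdge G x y) (f : Sym2 V → M) (v : V) :
    ∑ e ∈ G.edgeFinset with v ∈ e, f e = ∑ e ∈ rest G x y with v ∈ e, f e +
      ∑ u ∈ univ.erase y with v ∈ spoke G x y u, f (spoke G x y u) := by
  simp only [sum_filter]
  rw [← sum_sdiff hdom.image_spoke_subset, sum_image injOn_spoke_erase, rest]

lemma IsDominatingEdge.degree_eq (hdom : IsDominatingEdge G x y) (v : V) :
    G.degree v = #{e ∈ rest G x y | v ∈ e} + #{u ∈ univ.erase y | v ∈ spoke G x y u} := by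
  simp only [card_eq_sum_ones]
  rw [← hdom.sum_incident_eq (fun _ ↦ 1) v, ← card_eq_sum_ones,
    ← SimpleGraph.incidenceFinset_eq_filter, SimpleGraph.card_incidenceFinset_eq_degree]

lemma IsDominatingEdge.card_edgeFinset_eq (hdom : IsDominatingEdge G x y) :
    #G.edgeFinset = #(rest G x y) + #(near G x y ∪ far G x y) + 1 := by
  rw [← card_sdiff_add_card_eq_card hdom.image_spoke_subset, card_image_of_injOn injOn_spoke_erase,
    add_assoc, ← card_insert_of_notMem left_notMem_near_union_far,
    insert_near_union_far hdom.adj.ne, rest]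

lemma IsDominatingEdge.card_near_add_one (hdom : IsDominatingEdge G x y) :
    #(near G x y) + 1 = G.degree x := by
  rw [near, card_erase_add_one (by simpa using hdom.adj), SimpleGraph.card_neighborFinset_eq_degree]

lemma IsDominatingEdge.card_eq (hdom : IsDominatingEdge G x y) :
    Fintype.card V = #(near G x y) + #(far G x y) + 2 := by
  rw [← card_univ, ← card_erase_add_one (mem_univ y),
    ← insert_near_union_far (G := G) hdom.adj.ne, card_insert_of_notMem left_notMem_near_union_far,
    card_union_of_disjoint disjoint_near_far]

lemma IsDominatingEdge.card_rest_right_add_card_far (hdom : IsDominatingEdge G x y) :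
    #{e ∈ rest G x y | y ∈ e} + #(far G x y) + 1 = G.degree y := by
  rw [hdom.degree_eq, filter_mem_spoke_right hdom.adj.ne,
    card_insert_of_notMem left_notMem_far, add_assoc]

variable (G x y) in
/-- The part of the vertex sum at `v` that comes from the edges outside the double star when these
are labelled by `h`. -/
def restSum (h : Sym2 V → ℕ) (v : V) : ℕ := ∑ e ∈ rest G x y with v ∈ e, h e

variable {h : Sym2 V → ℕ}

-- The edges at `y` carry the smallest labels.
lemma restSum_right_le (hh : IsRanking (y ∉ ·) 0 (rest G x y) h) :
    restSum G x y h y ≤ #{e ∈ rest G x y | y ∈ e} * #{e ∈ rest G x y | y ∈ e} := by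
  refine sum_le_card_nsmul _ _ _ fun e he ↦ ?_
  rw [mem_filter] at he
  refine (hh.le_add_card_filter_key_le he.1).trans ?_
  rw [zero_add]
  exact card_le_card (monotone_filter_right _ fun e' _ hkey ↦ not_not.1 fun he' ↦ hkey he' he.2)

lemma IsDominatingEdge.restSum_le (hdom : IsDominatingEdge G x y)
    (hh : ∀ e ∈ rest G x y, h e ≤ #(rest G x y)) {v : V} (hv : v ∈ near G x y ∪ far G x y)
    (hdeg : G.degree v ≤ G.degree x) : restSum G x y h v ≤ #(near G x y) * #(rest G x y) := by
  obtain ⟨hvx, hvy⟩ := mem_near_union_far.1 hv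
  have hcard : #{e ∈ rest G x y | v ∈ e} ≤ #(near G x y) := by
    rw [hdom.degree_eq v, filter_mem_spoke_of_ne hvx hvy, card_singleton,
      ← hdom.card_near_add_one] at hdeg
    omega
  calc restSum G x y h v ≤ #{e ∈ rest G x y | v ∈ e} * #(rest G x y) :=
        sum_le_card_nsmul _ _ _ fun e he ↦ hh e (mem_filter.1 he).1
    _ ≤ #(near G x y) * #(rest G x y) := Nat.mul_le_mul_right _ hcard

lemma right_notMem_of_mem_rest {v : V} (hv : v ∈ far G x y) {e : Sym2 V} (he : e ∈ rest G x y)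
    (hve : v ∈ e) : y ∉ e := by
  obtain ⟨-, hvy, hxv⟩ := mem_far.1 hv
  intro hye
  refine spoke_notMem_rest (G := G) (x := x) hvy ?_
  rwa [spoke, hub_of_not_adj hxv, ← (Sym2.mem_and_mem_iff hvy).1 ⟨hve, hye⟩]

lemma card_far_restSum_ne_zero_le (h : Sym2 V → ℕ) :
    #{v ∈ far G x y | restSum G x y h v ≠ 0} ≤ 2 * #{e ∈ rest G x y | y ∉ e} := by
  have hsub : {v ∈ far G x y | restSum G x y h v ≠ 0} ⊆
      {e ∈ rest G x y | y ∉ e}.biUnion Sym2.toFinset := fun v hv ↦ by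
    obtain ⟨hfar, hne⟩ := mem_filter.1 hv
    obtain ⟨e, he, -⟩ := exists_ne_zero_of_sum_ne_zero hne
    obtain ⟨he, hve⟩ := mem_filter.1 he
    exact mem_biUnion.2 ⟨e, mem_filter.2 ⟨he, right_notMem_of_mem_rest hfar he hve⟩,
      Sym2.mem_toFinset.2 hve⟩
  rw [mul_comm]
  refine (card_le_card hsub).trans (card_biUnion_le_card_mul _ _ _ fun e _ ↦ ?_)
  rw [Sym2.card_toFinset]
  split_ifs <;> omega

lemma IsDominatingEdge.exists_bijOn_edgeFinset (hdom : IsDominatingEdge G x y) {g : V → ℕ} {m : ℕ}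
    (hm : #(rest G x y) ≤ m) (hh : Set.BijOn h (rest G x y) (Ioc 0 #(rest G x y)))
    (hg : Set.BijOn g (univ.erase y : Finset V) (Ioc #(rest G x y) m)) :
    ∃ f : Sym2 V → ℕ, Set.BijOn f G.edgeFinset (Ioc 0 m) ∧
      (∀ e ∈ rest G x y, f e = h e) ∧ ∀ v ∈ univ.erase y, f (spoke G x y v) = g v := by
  have : Nonempty V := ⟨y⟩
  set star := (univ.erase y).image (spoke G x y) with hstar
  set owner := Function.invFunOn (spoke G x y) (univ.erase y : Finset V)
  set f : Sym2 V → ℕ := fun e ↦ if e ∈ rest G x y then h e else g (owner e)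
  have hspoke : Set.BijOn (spoke G x y) (univ.erase y : Finset V) star := by
    rw [hstar, coe_image]
    exact injOn_spoke_erase.bijOn_image
  have hfrest : ∀ e ∈ rest G x y, h e = f e := fun e he ↦ (if_pos he).symm
  have hfstar : ∀ e ∈ star, g (owner e) = f e := fun e he ↦
    (if_neg fun h ↦ (mem_sdiff.1 h).2 he).symm
  have hbijrest := hh.congr hfrest
  have hbijstar := (hg.comp (hspoke.symm hspoke.invOn_invFunOn.symm)).congr hfstar
  refine ⟨f, ?_, fun e he ↦ (hfrest e he).symm, fun v hv ↦ ?_⟩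
  · rw [← sdiff_union_of_subset hdom.image_spoke_subset,
      ← Ioc_union_Ioc_eq_Ioc (Nat.zero_le _) hm, coe_union, coe_union]
    refine hbijrest.union hbijstar ((Set.injOn_union ?_).2
      ⟨hbijrest.injOn, hbijstar.injOn, fun e he e' he' hee' ↦ ?_⟩)
    · exact disjoint_coe.2 sdiff_disjoint
    · have := mem_Ioc.1 (hbijrest.mapsTo he)
      have := mem_Ioc.1 (hbijstar.mapsTo he')
      omega
  · rw [← hfstar _ (mem_image_of_mem _ hv)]
    exact congrArg g (hspoke.invOn_invFunOn.1 hv)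

lemma IsDominatingEdge.isAntimagic (hdom : IsDominatingEdge G x y) {g : V → ℕ}
    (hh : Set.BijOn h (rest G x y) (Ioc 0 #(rest G x y)))
    (hg : Set.BijOn g (univ.erase y : Finset V) (Ioc #(rest G x y) #G.edgeFinset))
    (hinj : Function.Injective fun v ↦
      restSum G x y h v + ∑ u ∈ univ.erase y with v ∈ spoke G x y u, g u) :
    IsAntimagic G := by
  obtain ⟨f, hf, hfrest, hfspoke⟩ :=
    hdom.exists_bijOn_edgeFinset (card_le_card sdiff_subset) hh hg
  refine ⟨f, by rwa [← zero_add 1, Icc_add_one_left_eq_Ioc], ?_⟩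
  convert hinj using 2 with v
  rw [sum_neighborFinset_eq_sum_incident, hdom.sum_incident_eq, restSum]
  congr 1
  · exact sum_congr rfl fun e he ↦ hfrest e (mem_filter.1 he).1
  · exact sum_congr rfl fun u hu ↦ hfspoke u (mem_filter.1 hu).1

lemma IsSeparating.injective_vertexSum (hxy : x ≠ y) {w g : V → ℕ}
    (hsep : IsSeparating (near G x y) (far G x y) w (w y) (g x) g) :
    Function.Injective fun v ↦ w v + ∑ u ∈ univ.erase y with v ∈ spoke G x y u, g u := by
  set σ : V → ℕ := fun v ↦ w v + ∑ u ∈ univ.erase y with v ∈ spoke G x y u, g u with hσ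
  have hx : g x + ∑ u ∈ near G x y, g u ≤ σ x := by
    simp only [hσ]
    rw [filter_mem_spoke_left hxy, sum_insert left_notMem_near]
    exact Nat.le_add_left _ _
  have hy : σ y = w y + (g x + ∑ u ∈ far G x y, g u) := by
    simp only [hσ]
    rw [filter_mem_spoke_right hxy, sum_insert left_notMem_far]
  have hleaf : ∀ v ∈ near G x y ∪ far G x y, σ v = w v + g v := fun v hv ↦ by
    obtain ⟨hvx, hvy⟩ := mem_near_union_far.1 hv
    simp only [hσ]
    rw [filter_mem_spoke_of_ne hvx hvy, sum_singleton]
  have hlt : ∀ v, v ≠ x → σ v < σ x := fun v hvx ↦ by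
    refine lt_of_lt_of_le ?_ hx
    obtain rfl | hvy := eq_or_ne v y
    · exact hy ▸ hsep.centre_lt
    · have hv : v ∈ near G x y ∪ far G x y := mem_near_union_far.2 ⟨hvx, hvy⟩
      exact hleaf v hv ▸ hsep.leaf_lt v hv
  have hne : ∀ v, v ≠ x → v ≠ y → σ v ≠ σ y := fun v hvx hvy ↦ by
    have hv : v ∈ near G x y ∪ far G x y := mem_near_union_far.2 ⟨hvx, hvy⟩
    rw [hleaf v hv, hy]
    exact hsep.leaf_ne v hv
  intro u v huv
  by_cases hux : u = x <;> by_cases hvx : v = x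
  · rw [hux, hvx]
  · exact absurd huv (hux ▸ (hlt v hvx).ne')
  · exact absurd huv (hvx ▸ (hlt u hux).ne)
  by_cases huy : u = y <;> by_cases hvy : v = y
  · rw [huy, hvy]
  · exact absurd huv (huy ▸ (hne v hvx hvy).symm)
  · exact absurd huv (hvy ▸ hne u hux huy)
  have hu : u ∈ near G x y ∪ far G x y := mem_near_union_far.2 ⟨hux, huy⟩
  have hv : v ∈ near G x y ∪ far G x y := mem_near_union_far.2 ⟨hvx, hvy⟩
  exact hsep.injOn_leaf hu hv (by simpa only [← hleaf u hu, ← hleaf v hv] using huv)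

end DoubleStar

/-- (Yilma 2013) If a graph `G` on `n` vertices has a vertex `x` of maximum degree
`d(x) = Δ(G) ≥ 2n/3` with a neighbor `y` such that `{x, y}` is a dominating clique
(every other vertex is adjacent to `x` or to `y`), then `G` is antimagic. -/
theorem antimagic_of_dominating_edge {V : Type*} [Fintype V] [DecidableEq V]
    (G : SimpleGraph V) [DecidableRel G.Adj] (x y : V)
    (hmax : G.degree x = G.maxDegree)
    (hdeg : 2 * Fintype.card V ≤ 3 * G.degree x)
    (hadj : G.Adj x y)
    (hdom : ∀ v : V, v ≠ x → v ≠ y → G.Adj v x ∨ G.Adj v y) :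
    IsAntimagic G := by
  have hedge : IsDominatingEdge G x y := ⟨hadj, hdom⟩
  have hle : ∀ v, G.degree v ≤ G.degree x := fun v ↦ hmax ▸ G.degree_le_maxDegree v
  obtain ⟨h, hh⟩ := exists_isRanking (y ∉ ·) 0 (rest G x y)
  have hn := hedge.card_eq
  have hx := hedge.card_near_add_one
  have hy := hedge.card_rest_right_add_card_far
  have hyx := hle y
  have hfar := card_far_restSum_ne_zero_le (G := G) (x := x) (y := y) h
  have hrest : #{e ∈ rest G x y | y ∈ e} + #{e ∈ rest G x y | y ∉ e} = #(rest G x y) :=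
    card_filter_add_card_filter_not _
  have hleaf : ∀ v ∈ near G x y ∪ far G x y,
      restSum G x y h v ≤ #(near G x y) * #(rest G x y) := fun v hv ↦
    hedge.restSum_le (fun e he ↦ by simpa using (mem_Ioc.1 (hh.mem_Ioc he)).2) hv (hle v)
  obtain ⟨g, hsep, hg⟩ := exists_isSeparating (x := x) left_notMem_near_union_far
    disjoint_near_far (by omega) (by omega) (restSum_right_le hh) (by omega) hleaf
  rw [insert_near_union_far hadj.ne, ← hedge.card_edgeFinset_eq] at hg
  exact hedge.isAntimagic (by simpa using hh.bijOn) hg (hsep.injective_vertexSum hadj.ne)
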